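/- Given real numbers a < b and formal power series P = a₁X + ⋯ and Q = b₁X + ⋯ with a₁ > 0 and b₁ > 0, there exists a smooth diffeomorphism f of ℝ with f(a) = a, f(b) = b, whose truncated Taylor series at a equals P and whose truncated Taylor series at b equals Q. -/

import Mathlib

/-!
By Borel's theorem there are smooth functions with arbitrary jets at `a` and at `b`. Start from a
small positive constant and replace it, near `a` and then near `b`, by functions having the
derivatives of the wanted jets: on small enough neighbourhoods this preserves positivity and hardly
changes the integral over `[a, b]`, which therefore stays below the prescribed increment. A
nonnegative bump in the middle of the interval makes the integral right. The resulting function is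
smooth and bounded below by a positive constant, so its primitive is a diffeomorphism of `ℝ`.
-/

open Filter MeasureTheory Metric Set
open scoped ContDiff Topology

section Borel

variable {E : Type*} [NormedAddCommGroup E] [NormedSpace ℝ E]

theorem exists_norm_iteratedDeriv_le_of_hasCompactSupport {f : ℝ → E} {k : ℕ}
    (hf : ContDiff ℝ k f) (hc : HasCompactSupport f) : ∃ C, ∀ x, ‖iteratedDeriv k f x‖ ≤ C := by
  simp only [← norm_iteratedFDeriv_eq_norm_iteratedDeriv]
  exact (hc.iteratedFDeriv k).exists_bound_of_continuous
    (hf.continuous_iteratedFDeriv le_rfl)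

theorem iteratedDeriv_inv_pow_smul_comp_const_mul {f : ℝ → E} {k : ℕ} (hf : ContDiff ℝ k f)
    (L : ℝ) (n : ℕ) (x : ℝ) :
    iteratedDeriv k (fun y => (L ^ n)⁻¹ • f (L * y)) x
      = (L ^ k / L ^ n) • iteratedDeriv k f (L * x) := by
  rw [iteratedDeriv_fun_const_smul_field,
    iteratedDeriv_comp_const_smul hf, smul_smul, div_eq_inv_mul]

theorem eventually_norm_iteratedDeriv_inv_pow_smul_comp_const_mul_le {f : ℝ → E}
    (hf : ContDiff ℝ ∞ f) (hc : HasCompactSupport f) (n : ℕ) {ε : ℝ} (hε : 0 < ε) :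
    ∀ᶠ L : ℝ in atTop, ∀ k < n, ∀ x,
      ‖iteratedDeriv k (fun y => (L ^ n)⁻¹ • f (L * y)) x‖ ≤ ε := by
  refine (eventually_all_finite (finite_Iio n)).2 fun k hk => ?_
  have hfk : ContDiff ℝ k f := hf.of_le (mod_cast le_top)
  obtain ⟨C, hC⟩ := exists_norm_iteratedDeriv_le_of_hasCompactSupport hfk hc
  have hlim : Tendsto (fun L : ℝ => L ^ k / L ^ n * C) atTop (𝓝 0) := by
    simpa only [zero_mul] using (tendsto_pow_div_pow_atTop_zero hk).mul_const C
  filter_upwards [hlim.eventually_le_const hε, eventually_ge_atTop 0] with L hLε hL x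
  have hratio : 0 ≤ L ^ k / L ^ n := by positivity
  calc ‖iteratedDeriv k (fun y => (L ^ n)⁻¹ • f (L * y)) x‖
      = L ^ k / L ^ n * ‖iteratedDeriv k f (L * x)‖ := by
        rw [iteratedDeriv_inv_pow_smul_comp_const_mul hfk, norm_smul, Real.norm_of_nonneg hratio]
    _ ≤ L ^ k / L ^ n * C := by gcongr; exact hC _
    _ ≤ ε := hLε

theorem exists_contDiff_eventuallyEq_pow_smul_norm_iteratedDeriv_le (n : ℕ) (c : E) {ε : ℝ}
    (hε : 0 < ε) :
    ∃ φ : ℝ → E, ContDiff ℝ ∞ φ ∧ HasCompactSupport φ ∧ (φ =ᶠ[𝓝 0] fun x => x ^ n • c) ∧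
      ∀ k < n, ∀ x, ‖iteratedDeriv k φ x‖ ≤ ε := by
  let χ : ContDiffBump (0 : ℝ) := ⟨1, 2, one_pos, one_lt_two⟩
  let θ : ℝ → E := fun x => χ x • x ^ n • c
  have hθ : ContDiff ℝ ∞ θ := χ.contDiff.smul ((contDiff_id.pow n).smul contDiff_const)
  have hθc : HasCompactSupport θ := χ.hasCompactSupport.smul_right
  have hθ0 : θ =ᶠ[𝓝 0] fun x => x ^ n • c := by
    filter_upwards [χ.eventuallyEq_one] with x hx
    simp only [θ, hx, Pi.one_apply, one_smul]
  obtain ⟨L, hLε, hL⟩ :=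
    ((eventually_norm_iteratedDeriv_inv_pow_smul_comp_const_mul_le hθ hθc n hε).and
      (eventually_gt_atTop 0)).exists
  refine ⟨fun x => (L ^ n)⁻¹ • θ (L * x), (hθ.comp (contDiff_const.mul contDiff_id)).const_smul _,
    (hθc.comp_homeomorph (Homeomorph.mulLeft₀ L hL.ne')).smul_left, ?_, hLε⟩
  have hmul : Tendsto (L * ·) (𝓝 0) (𝓝 0) := Continuous.tendsto' (by fun_prop) _ _ (mul_zero L)
  filter_upwards [hmul.eventually hθ0] with x hx
  rw [hx, mul_pow, mul_smul, inv_smul_smul₀ (pow_ne_zero n hL.ne')]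

theorem exists_summable_norm_iteratedDeriv_le {φ : ℕ → ℝ → E} {u : ℕ → ℝ} {k : ℕ} (hu : Summable u)
    (hφ : ∀ n, ContDiff ℝ k (φ n)) (hc : ∀ n, HasCompactSupport (φ n))
    (hφu : ∀ n > k, ∀ x, ‖iteratedDeriv k (φ n) x‖ ≤ u n) :
    ∃ v : ℕ → ℝ, Summable v ∧ ∀ n x, ‖iteratedDeriv k (φ n) x‖ ≤ v n := by
  choose C hC using fun n => exists_norm_iteratedDeriv_le_of_hasCompactSupport (hφ n) (hc n)
  refine ⟨fun n => if k < n then u n else C n, ?_, fun n x => ?_⟩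
  · refine (summable_congr_atTop ?_).2 hu
    filter_upwards [eventually_gt_atTop k] with n hn using if_pos hn
  · dsimp only
    split_ifs with hn
    exacts [hφu n hn x, hC n x]

theorem iteratedDeriv_tsum_apply {ι 𝕜 F : Type*} [RCLike 𝕜] [NormedAddCommGroup F] [NormedSpace 𝕜 F]
    [CompleteSpace F] {f : ι → 𝕜 → F} {v : ℕ → ι → ℝ} {N : ℕ∞} (hf : ∀ i, ContDiff 𝕜 N (f i))
    (hv : ∀ k : ℕ, (k : ℕ∞) ≤ N → Summable (v k))
    (hfv : ∀ (k : ℕ) i x, (k : ℕ∞) ≤ N → ‖iteratedDeriv k (f i) x‖ ≤ v k i) {k : ℕ}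
    (hk : (k : ℕ∞) ≤ N) (x : 𝕜) :
    iteratedDeriv k (fun y => ∑' i, f i y) x = ∑' i, iteratedDeriv k (f i) x := by
  simp only [← norm_iteratedFDeriv_eq_norm_iteratedDeriv] at hfv
  simp only [iteratedDeriv_eq_equiv_comp, Function.comp_apply,
    iteratedFDeriv_tsum_apply hf hv hfv hk]
  exact (ContinuousMultilinearMap.piFieldEquiv 𝕜 (Fin k) F).symm.toContinuousLinearEquiv.map_tsum

/-- **Borel's theorem**: the monomials of the Taylor series are cut off at scales so small that all
their derivatives of order below the degree are summably small. -/
theorem exists_contDiff_iteratedDeriv_eq [CompleteSpace E] (p : ℝ) (c : ℕ → E) :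
    ∃ F : ℝ → E, ContDiff ℝ ∞ F ∧ ∀ k, iteratedDeriv k F p = c k := by
  choose φ hφ hφc hφ0 hφu using fun n =>
    exists_contDiff_eventuallyEq_pow_smul_norm_iteratedDeriv_le n ((n.factorial : ℝ)⁻¹ • c n)
      (ε := (1 / 2) ^ n) (by positivity)
  choose v hv hφv using fun k =>
    exists_summable_norm_iteratedDeriv_le summable_geometric_two
      (fun n => (hφ n).of_le (mod_cast le_top)) hφc fun n hn => hφu n k hn
  have hφk (n k : ℕ) : iteratedDeriv k (φ n) 0 = if n = k then c k else 0 := by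
    rw [(hφ0 n).iteratedDeriv_eq, iteratedDeriv_smul_const (by fun_prop),
      iteratedDeriv_fun_pow_zero]
    rcases eq_or_ne n k with rfl | hnk
    · simp [smul_smul, Nat.factorial_ne_zero]
    · simp [hnk, hnk.symm]
  have hsmooth : ContDiff ℝ ∞ fun x => ∑' n, φ n x :=
    contDiff_tsum hφ (fun k _ => hv k) fun k n x _ => by
      simpa only [norm_iteratedFDeriv_eq_norm_iteratedDeriv] using hφv k n x
  refine ⟨fun x => ∑' n, φ n (x - p), hsmooth.comp (contDiff_id.sub contDiff_const), fun k => ?_⟩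
  simp only [iteratedDeriv_comp_sub_const (f := fun x => ∑' n, φ n x), sub_self, hφk, tsum_ite_eq,
    iteratedDeriv_tsum_apply hφ (fun k _ => hv k) (fun k n x _ => hφv k n x) le_top]

end Borel

theorem norm_intervalIntegral_contDiffBump_smul_le {E : Type*} [NormedAddCommGroup E]
    [NormedSpace ℝ E] {p M : ℝ} (χ : ContDiffBump p) {f : ℝ → E}
    (hf : ∀ x ∈ ball p χ.rOut, ‖f x‖ ≤ M) (a b : ℝ) :
    ‖∫ x in a..b, χ x • f x‖ ≤ 2 * χ.rOut * M := by
  have hM : 0 ≤ M := (norm_nonneg _).trans (hf p (mem_ball_self χ.rOut_pos))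
  have hle (x : ℝ) : ‖χ x • f x‖ ≤ χ x * M := by
    rw [norm_smul, Real.norm_of_nonneg χ.nonneg]
    by_cases hx : x ∈ ball p χ.rOut
    · exact mul_le_mul_of_nonneg_left (hf x hx) χ.nonneg
    · simp [χ.zero_of_le_dist (not_lt.1 hx)]
  have hint : Integrable fun x => χ x * M := χ.integrable.mul_const M
  calc ‖∫ x in a..b, χ x • f x‖ = ‖∫ x in uIoc a b, χ x • f x‖ :=
        intervalIntegral.norm_integral_eq_norm_integral_uIoc _
    _ ≤ ∫ x in uIoc a b, χ x * M :=
        norm_integral_le_of_norm_le hint.integrableOn (ae_of_all _ hle)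
    _ ≤ ∫ x, χ x * M :=
        setIntegral_le_integral hint (ae_of_all _ fun x => mul_nonneg χ.nonneg hM)
    _ = (∫ x, χ x) * M := integral_mul_const M _
    _ ≤ 2 * χ.rOut * M := by
        gcongr
        exact (χ.integral_le_measure_closedBall _).trans_eq
          (Real.volume_real_closedBall χ.rOut_pos.le)

theorem add_contDiffBump_smul_sub_mem {E F : Type*} [NormedAddCommGroup E] [NormedSpace ℝ E]
    [HasContDiffBump E] [AddCommGroup F] [Module ℝ F] {s : Set F} (hs : Convex ℝ s) {p x : E}
    (χ : ContDiffBump p) {y z : F} (hy : y ∈ s) (hz : x ∈ ball p χ.rOut → z ∈ s) :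
    y + χ x • (z - y) ∈ s := by
  by_cases hx : x ∈ ball p χ.rOut
  · exact hs.add_smul_sub_mem hy (hz hx) ⟨χ.nonneg, χ.le_one⟩
  · simpa [χ.zero_of_le_dist (not_lt.1 hx)] using hy

theorem exists_contDiff_ge_iteratedDeriv_eq {h : ℝ → ℝ} (hh : ContDiff ℝ ∞ h) {m : ℝ}
    (hm : ∀ x, m ≤ h x) {p : ℝ} {s : Set ℝ} (hs : s ∈ 𝓝 p) {u : ℕ → ℝ} (hu : m < u 0) {ε : ℝ}
    (hε : 0 < ε) :
    ∃ g : ℝ → ℝ, ContDiff ℝ ∞ g ∧ (∀ x, m ≤ g x) ∧ EqOn g h sᶜ ∧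
      (∀ k, iteratedDeriv k g p = u k) ∧
      ∀ a b, |(∫ x in a..b, g x) - ∫ x in a..b, h x| ≤ ε := by
  obtain ⟨F, hF, hFu⟩ := exists_contDiff_iteratedDeriv_eq p u
  have hFp : m < F p := by simpa only [← hFu 0, iteratedDeriv_zero] using hu
  obtain ⟨M, hM⟩ : ∃ M, |F p - h p| < M := exists_gt _
  have hM0 : 0 < M := (abs_nonneg _).trans_lt hM
  obtain ⟨ρ, hρ, hnear⟩ : ∃ ρ > 0, ∀ x ∈ ball p ρ, x ∈ s ∧ m < F x ∧ |F x - h x| < M :=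
    eventually_nhds_iff_ball.1 <| (eventually_mem_set.2 hs).and <|
      (hF.continuous.continuousAt.eventually_const_lt hFp).and
        ((hF.continuous.sub hh.continuous).abs.continuousAt.eventually_lt_const hM)
  obtain ⟨δ, hδ, hδlt⟩ : ∃ δ, 0 < δ ∧ δ < min ρ (ε / (2 * M)) := exists_between (by positivity)
  obtain ⟨hδρ, hδε⟩ := lt_min_iff.1 hδlt
  let χ : ContDiffBump p := ⟨δ / 2, δ, half_pos hδ, half_lt_self hδ⟩
  have hball (x : ℝ) (hx : x ∈ ball p χ.rOut) : x ∈ s ∧ m < F x ∧ |F x - h x| < M :=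
    hnear x (ball_subset_ball hδρ.le hx)
  have hχF : ContDiff ℝ ∞ fun x => χ x • (F x - h x) := χ.contDiff.smul (hF.sub hh)
  refine ⟨fun x => h x + χ x • (F x - h x), hh.add hχF, fun x => ?_, fun x hx => ?_, fun k => ?_,
    fun a b => ?_⟩
  · exact add_contDiffBump_smul_sub_mem (convex_Ici m) χ (hm x) fun hx => (hball x hx).2.1.le
  · simp [χ.zero_of_le_dist (not_lt.1 fun hxδ => hx (hball x hxδ).1)]
  · rw [← hFu k]
    refine EventuallyEq.iteratedDeriv_eq k ?_
    filter_upwards [χ.eventuallyEq_one] with x hx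
    simp [hx]
  · rw [intervalIntegral.integral_add (hh.continuous.intervalIntegrable a b)
      (hχF.continuous.intervalIntegrable a b), add_sub_cancel_left]
    calc |∫ x in a..b, χ x • (F x - h x)| ≤ 2 * χ.rOut * M :=
          norm_intervalIntegral_contDiffBump_smul_le (f := fun x => F x - h x) χ
            (fun x hx => (hball x hx).2.2.le) a b
      _ ≤ ε := by
          have := (lt_div_iff₀ (mul_pos two_pos hM0)).1 hδε
          linarith

theorem exists_contDiff_ge_intervalIntegral_eq {a b I : ℝ} (hab : a < b) {h : ℝ → ℝ}
    (hh : ContDiff ℝ ∞ h) (hI : ∫ x in a..b, h x ≤ I) :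
    ∃ g : ℝ → ℝ, ContDiff ℝ ∞ g ∧ h ≤ g ∧ g =ᶠ[𝓝 a] h ∧ g =ᶠ[𝓝 b] h ∧ ∫ x in a..b, g x = I := by
  let ψ : ContDiffBump ((a + b) / 2) := ⟨(b - a) / 8, (b - a) / 4, by linarith, by linarith⟩
  let w : ℝ → ℝ := ψ.normed volume
  have hw : ContDiff ℝ ∞ w := ψ.contDiff_normed
  have hsupp : tsupport w ⊆ Ioo a b := by
    rw [ψ.tsupport_normed_eq, Real.closedBall_eq_Icc]
    exact Icc_subset_Ioo (by simp only [ψ]; linarith) (by simp only [ψ]; linarith)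
  have hwint : ∫ x in a..b, w x = 1 := by
    rw [intervalIntegral.integral_eq_integral_of_support_subset
      ((subset_tsupport w).trans (hsupp.trans Ioo_subset_Ioc_self)), ψ.integral_normed]
  let K : ℝ := I - ∫ x in a..b, h x
  have hK : 0 ≤ K := sub_nonneg.2 hI
  have hgerm (q : ℝ) (hq : q ∉ Ioo a b) : (fun x => h x + K * w x) =ᶠ[𝓝 q] h := by
    filter_upwards [notMem_tsupport_iff_eventuallyEq.1 fun hqw => hq (hsupp hqw)] with x hx
    simp [hx]
  refine ⟨fun x => h x + K * w x, hh.add (contDiff_const.mul hw),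
    fun x => le_add_of_nonneg_right (mul_nonneg hK (ψ.nonneg_normed x)),
    hgerm a left_notMem_Ioo, hgerm b right_notMem_Ioo, ?_⟩
  rw [intervalIntegral.integral_add (hh.continuous.intervalIntegrable a b)
    ((hw.continuous.intervalIntegrable a b).const_mul K), intervalIntegral.integral_const_mul,
    hwint, mul_one, add_sub_cancel]

theorem exists_contDiff_pos_le_iteratedDeriv_eq_intervalIntegral_eq {a b I : ℝ} (hab : a < b)
    (hI : 0 < I) {u v : ℕ → ℝ} (hu : 0 < u 0) (hv : 0 < v 0) :
    ∃ g : ℝ → ℝ, ContDiff ℝ ∞ g ∧ (∃ m > 0, ∀ x, m ≤ g x) ∧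
      (∀ k, iteratedDeriv k g a = u k) ∧ (∀ k, iteratedDeriv k g b = v k) ∧
      ∫ x in a..b, g x = I := by
  have hba : 0 < b - a := sub_pos.2 hab
  obtain ⟨m, hm, hmlt⟩ : ∃ m, 0 < m ∧ m < min (min (u 0) (v 0)) (I / (b - a)) :=
    exists_between (by positivity)
  simp only [lt_min_iff, lt_div_iff₀ hba] at hmlt
  obtain ⟨⟨hmu, hmv⟩, hmI⟩ := hmlt
  have hε : 0 < (I - m * (b - a)) / 2 := by linarith
  obtain ⟨g₁, hg₁, hmg₁, -, hg₁a, hint₁⟩ := exists_contDiff_ge_iteratedDeriv_eq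
    (h := fun _ => m) contDiff_const (fun _ => le_rfl) (univ_mem (f := 𝓝 a)) hmu hε
  obtain ⟨c, hac, hcb⟩ := exists_between hab
  obtain ⟨g₂, hg₂, hmg₂, hg₂₁, hg₂b, hint₂⟩ := exists_contDiff_ge_iteratedDeriv_eq
    hg₁ hmg₁ (Ioi_mem_nhds hcb) hmv hε
  have hg₂a : g₂ =ᶠ[𝓝 a] g₁ := hg₂₁.eventuallyEq_of_mem (by simpa using Iic_mem_nhds hac)
  have hint : ∫ x in a..b, g₂ x ≤ I := by
    have h₁ := (abs_le.1 (hint₁ a b)).2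
    have h₂ := (abs_le.1 (hint₂ a b)).2
    rw [intervalIntegral.integral_const, smul_eq_mul] at h₁
    linarith
  obtain ⟨g, hg, hg₂g, hga, hgb, hgI⟩ := exists_contDiff_ge_intervalIntegral_eq hab hg₂ hint
  exact ⟨g, hg, ⟨m, hm, fun x => (hmg₂ x).trans (hg₂g x)⟩,
    fun k => ((hga.trans hg₂a).iteratedDeriv_eq k).trans (hg₁a k),
    fun k => (hgb.iteratedDeriv_eq k).trans (hg₂b k), hgI⟩

theorem bijective_of_forall_le_deriv {f : ℝ → ℝ} (hf : Differentiable ℝ f) {m : ℝ} (hm : 0 < m)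
    (hmf : ∀ x, m ≤ deriv f x) : Function.Bijective f := by
  have hgrowth := mul_sub_le_image_sub_of_le_deriv hf hmf
  have htop : Tendsto f atTop atTop := by
    refine tendsto_atTop_mono' _ ?_
      (tendsto_atTop_add_const_left _ (f 0) (tendsto_id.const_mul_atTop hm))
    filter_upwards [eventually_ge_atTop 0] with x hx
    rw [id_eq]
    linarith [hgrowth hx]
  have hbot : Tendsto f atBot atBot := by
    refine tendsto_atBot_mono' _ ?_
      (tendsto_atBot_add_const_left _ (f 0) (tendsto_id.const_mul_atBot hm))
    filter_upwards [eventually_le_atBot 0] with x hx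
    rw [id_eq]
    linarith [hgrowth hx]
  exact ⟨(strictMono_of_deriv_pos fun x => hm.trans_le (hmf x)).injective,
    hf.continuous.surjective htop hbot⟩

theorem deriv_const_add_intervalIntegral {E : Type*} [NormedAddCommGroup E] [NormedSpace ℝ E]
    [CompleteSpace E] {g : ℝ → E} (hg : Continuous g) (a : ℝ) (c : E) :
    deriv (fun x => c + ∫ t in a..x, g t) = g :=
  funext fun x => ((hg.integral_hasStrictDerivAt a x).hasDerivAt.const_add c).deriv

theorem contDiff_const_add_intervalIntegral {E : Type*} [NormedAddCommGroup E] [NormedSpace ℝ E]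
    [CompleteSpace E] {g : ℝ → E} (hg : ContDiff ℝ ∞ g) (a : ℝ) (c : E) :
    ContDiff ℝ ∞ fun x => c + ∫ t in a..x, g t := by
  refine contDiff_infty_iff_deriv.2 ⟨fun x => ?_, ?_⟩
  · exact ((hg.continuous.integral_hasStrictDerivAt a x).hasDerivAt.const_add c).differentiableAt
  · rwa [deriv_const_add_intervalIntegral hg.continuous]

theorem stmt_13_general (a b c d : ℝ) (hab : a < b) (hcd : c < d) (P Q : ℕ → ℝ)
    (hP1 : 0 < P 1) (hQ1 : 0 < Q 1) :
    ∃ f : ℝ → ℝ, ContDiff ℝ ∞ f ∧ Function.Bijective f ∧ StrictMono f ∧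
      (∀ x : ℝ, 0 < deriv f x) ∧ f a = c ∧ f b = d ∧
      (∀ n : ℕ, 1 ≤ n → iteratedDeriv n f a = n.factorial * P n) ∧
      (∀ n : ℕ, 1 ≤ n → iteratedDeriv n f b = n.factorial * Q n) := by
  obtain ⟨g, hg, ⟨m, hm, hmg⟩, hga, hgb, hint⟩ :=
    exists_contDiff_pos_le_iteratedDeriv_eq_intervalIntegral_eq hab (sub_pos.2 hcd)
      (u := fun k => (k + 1).factorial * P (k + 1)) (v := fun k => (k + 1).factorial * Q (k + 1))
      (by simpa using hP1) (by simpa using hQ1)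
  let f : ℝ → ℝ := fun x => c + ∫ t in a..x, g t
  have hf : ContDiff ℝ ∞ f := contDiff_const_add_intervalIntegral hg a c
  have hfg : deriv f = g := deriv_const_add_intervalIntegral hg.continuous a c
  have hpos (x : ℝ) : 0 < deriv f x := by simpa only [hfg] using hm.trans_le (hmg x)
  have htaylor (k : ℕ) : iteratedDeriv (k + 1) f = iteratedDeriv k g := by
    rw [iteratedDeriv_succ', hfg]
  refine ⟨f, hf, bijective_of_forall_le_deriv (hf.differentiable (by simp)) hm (by rwa [hfg]),
    strictMono_of_deriv_pos hpos, hpos, by simp [f], by simp [f, hint], ?_, ?_⟩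
  · intro n hn
    obtain ⟨k, rfl⟩ := Nat.exists_eq_add_of_le' hn
    rw [htaylor, hga]
  · intro n hn
    obtain ⟨k, rfl⟩ := Nat.exists_eq_add_of_le' hn
    rw [htaylor, hgb]

/-- Given `a < b` and formal power series `P = a₁X + ⋯`, `Q = b₁X + ⋯` with `a₁ > 0`
and `b₁ > 0`, there is a smooth diffeomorphism `f` of `ℝ` fixing `a` and `b` whose
truncated Taylor series at `a` is `P` and at `b` is `Q`. -/
theorem stmt_13 (a b : ℝ) (hab : a < b) (P Q : ℕ → ℝ)
    (hP1 : 0 < P 1) (hQ1 : 0 < Q 1) :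
    ∃ f : ℝ → ℝ, ContDiff ℝ (⊤ : ℕ∞) f ∧ Function.Bijective f ∧ StrictMono f ∧
      (∀ x : ℝ, 0 < deriv f x) ∧ f a = a ∧ f b = b ∧
      (∀ n : ℕ, 1 ≤ n → iteratedDeriv n f a = n.factorial * P n) ∧
      (∀ n : ℕ, 1 ≤ n → iteratedDeriv n f b = n.factorial * Q n) :=
  stmt_13_general a b a b hab hab P Q hP1 hQ1
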